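/- For every n ≥ 0, the number of partitions of n into parts congruent to 1 or 4 modulo 5 equals the number of partitions of n into parts λ₁ ≥ λ₂ ≥ ... ≥ λ_t with λ_i - λ_{i+1} ≥ 2 for all i. -/

import Mathlib

/-!
Let `F k` be the generating function of the partitions of the second kind with all parts greater
than `k`. Removing a possible part `k + 1` gives `F k = F (k + 1) + X ^ (k + 1) * F (k + 2)`, and
this recurrence has only one solution with `F k → 1`. Rogers's series `∑ r, rogersTerm X k r`
satisfies the same recurrence, by telescoping, and tends to `E = ∏ (1 - X ^ (i + 1))`; hence it
equals `F k * E`. For `k = 0` it is a two-sided theta series, which the Jacobi triple product turns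
into the product of the `1 - X ^ m` over `m ≡ 0, 2, 3 [MOD 5]`. Dividing by `E` leaves
the product of the `(1 - X ^ m)⁻¹` over `m ≡ 1, 4 [MOD 5]`, Euler's product for the partitions of
the first kind.
-/

namespace RogersRamanujan

open Finset

section QSeries

variable {R : Type*} [CommRing R]

/-- The `q`-Pochhammer symbol `(q; q)_n`. -/
def qPochhammer (q : R) (n : ℕ) : R :=
  ∏ i ∈ range n, (1 - q ^ (i + 1))

theorem qPochhammer_succ (q : R) (n : ℕ) :
    qPochhammer q (n + 1) = qPochhammer q n * (1 - q ^ (n + 1)) :=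
  prod_range_succ _ _

theorem pow_dvd_qPochhammer_sub {x q : R} (hq : x ∣ q) {n m : ℕ} (hnm : n ≤ m) :
    x ^ (n + 1) ∣ qPochhammer q m - qPochhammer q n := by
  induction m, hnm using Nat.le_induction with
  | base => simp
  | succ m hnm ih =>
    have hdvd : x ^ (n + 1) ∣ q ^ (m + 1) :=
      (pow_dvd_pow_of_dvd hq _).trans (pow_dvd_pow q (by lia))
    rw [qPochhammer_succ, mul_sub, mul_one, sub_right_comm]
    exact dvd_sub ih (hdvd.mul_left _)

/-- The Gaussian binomial coefficient, defined by the `q`-Pascal rule so that it makes sense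
without any division. -/
def gaussBinom (q : R) : ℕ → ℕ → R
  | _, 0 => 1
  | 0, _ + 1 => 0
  | n + 1, k + 1 => gaussBinom q n k + q ^ (k + 1) * gaussBinom q n (k + 1)

@[simp]
theorem gaussBinom_zero_right (q : R) (n : ℕ) : gaussBinom q n 0 = 1 := by
  cases n <;> rfl

theorem gaussBinom_succ_succ (q : R) (n k : ℕ) :
    gaussBinom q (n + 1) (k + 1) = gaussBinom q n k + q ^ (k + 1) * gaussBinom q n (k + 1) :=
  rfl

theorem gaussBinom_eq_zero_of_lt (q : R) {n k : ℕ} (h : n < k) : gaussBinom q n k = 0 := by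
  induction n generalizing k with
  | zero => obtain ⟨k, rfl⟩ := Nat.exists_eq_add_one_of_ne_zero h.ne'; rfl
  | succ n ih =>
    obtain ⟨k, rfl⟩ := Nat.exists_eq_add_one_of_ne_zero (Nat.ne_zero_of_lt h)
    rw [gaussBinom_succ_succ, ih (by lia), ih (by lia), mul_zero, add_zero]

theorem gaussBinom_mul_qPochhammer_mul_qPochhammer (q : R) (k l : ℕ) :
    gaussBinom q (k + l) k * qPochhammer q k * qPochhammer q l = qPochhammer q (k + l) := by
  induction hn : k + l generalizing k l with
  | zero =>
    obtain ⟨rfl, rfl⟩ : k = 0 ∧ l = 0 := by lia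
    simp [qPochhammer]
  | succ n ih =>
    rcases k with - | k
    · obtain rfl : l = n + 1 := by lia
      simp [qPochhammer]
    have hk := ih k l (by lia)
    rw [gaussBinom_succ_succ, qPochhammer_succ q n]
    rcases l with - | l
    · obtain rfl : k = n := by lia
      rw [gaussBinom_eq_zero_of_lt q (Nat.lt_succ_self k), qPochhammer_succ]
      linear_combination (1 - q ^ (k + 1)) * hk
    · have hl := ih (k + 1) l (by lia)
      obtain rfl : n = k + (l + 1) := by lia
      rw [qPochhammer_succ q l, qPochhammer_succ q k] at *
      linear_combination (1 - q ^ (k + 1)) * hk + q ^ (k + 1) * (1 - q ^ (l + 1)) * hl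

theorem sum_gaussBinom_succ_mul {q x y : R} {s t : ℕ → R} (hx : ∀ k, t (k + 1) = x * s k)
    (hy : ∀ k, q ^ k * t k = y * s k) (n : ℕ) :
    ∑ k ∈ range (n + 2), gaussBinom q (n + 1) k * t k =
      (x + y) * ∑ k ∈ range (n + 1), gaussBinom q n k * s k := by
  calc ∑ k ∈ range (n + 2), gaussBinom q (n + 1) k * t k
    _ = ∑ k ∈ range (n + 1), gaussBinom q n k * t (k + 1) +
        ∑ k ∈ range (n + 2), gaussBinom q n k * (q ^ k * t k) := by
      rw [sum_range_succ', sum_range_succ' (fun k ↦ gaussBinom q n k * (q ^ k * t k)),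
        ← add_assoc, ← sum_add_distrib]
      simp only [gaussBinom_succ_succ, gaussBinom_zero_right, pow_zero, one_mul]
      congr! 2
      ring
    _ = (x + y) * ∑ k ∈ range (n + 1), gaussBinom q n k * s k := by
      rw [sum_range_succ _ (n + 1), gaussBinom_eq_zero_of_lt q (Nat.lt_succ_self n), zero_mul,
        add_zero, mul_sum, ← sum_add_distrib]
      refine sum_congr rfl fun k _ ↦ ?_
      rw [hx, hy]
      ring

/-- **Gauss's `q`-binomial theorem**. -/
theorem prod_one_add_mul_pow (q z : R) (n : ℕ) :
    ∏ i ∈ range n, (1 + z * q ^ i) =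
      ∑ k ∈ range (n + 1), gaussBinom q n k * (q ^ k.choose 2 * z ^ k) := by
  induction n generalizing z with
  | zero => simp
  | succ n ih =>
    have hprod : ∏ i ∈ range n, (1 + z * q ^ (i + 1)) = ∏ i ∈ range n, (1 + z * q * q ^ i) :=
      prod_congr rfl fun i _ ↦ by ring
    rw [prod_range_succ', hprod, ih, pow_zero, mul_one, add_comm 1 z, mul_comm]
    refine (sum_gaussBinom_succ_mul (fun k ↦ ?_) (fun k ↦ ?_) n).symm
    · rw [Nat.choose_succ_succ' k 1, Nat.choose_one_right]
      ring
    · ring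

end QSeries

section Theta

/-- The triangular number `j * (j + 1) / 2`, which is a natural number for every integer `j`. -/
def triangular (j : ℤ) : ℕ :=
  (j * (j + 1) / 2).toNat

theorem two_mul_triangular (j : ℤ) : 2 * (triangular j : ℤ) = j * (j + 1) := by
  have hnonneg : 0 ≤ j * (j + 1) := by
    rcases le_or_gt 0 j with h | h <;> nlinarith
  rw [triangular, Int.toNat_of_nonneg (by lia),
    Int.mul_ediv_cancel' (Int.even_mul_succ_self j).two_dvd]

theorem triangular_add_one (j : ℤ) : (triangular (j + 1) : ℤ) = triangular j + (j + 1) := by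
  linarith [two_mul_triangular j, two_mul_triangular (j + 1)]

theorem triangular_neg_sub_one (j : ℤ) : triangular (-j - 1) = triangular j := by
  zify
  linarith [two_mul_triangular j, two_mul_triangular (-j - 1)]

theorem triangular_add_triangular_sub_one (j : ℤ) :
    triangular j + triangular (j - 1) = j.natAbs ^ 2 := by
  zify
  rw [sq_abs]
  linarith [two_mul_triangular j, two_mul_triangular (j - 1)]

variable {R : Type*} [CommRing R]

/-- The `j`-th term of Ramanujan's theta function
`∑ z ^ (j * (j + 1) / 2) * w ^ (j * (j - 1) / 2)`, the sum being over all integers `j`. -/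
def thetaTerm (z w : R) (j : ℤ) : R :=
  z ^ triangular j * w ^ triangular (j - 1)

theorem thetaTerm_add_one (z w : R) (r : ℕ) :
    thetaTerm z w (r + 1) = z ^ (r + 1) * w ^ r * thetaTerm z w r := by
  have hz : triangular (r + 1) = r + 1 + triangular r := by
    have := triangular_add_one r
    lia
  have hw : triangular (r + 1 - 1) = r + triangular (r - 1) := by
    have := triangular_add_one (r - 1)
    rw [sub_add_cancel] at this
    rw [add_sub_cancel_right]
    lia
  rw [thetaTerm, hz, hw, thetaTerm]
  ring

theorem thetaTerm_neg_add_one (z w : R) (r : ℕ) :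
    thetaTerm z w (-(r + 1)) = w ^ (2 * r + 1) * thetaTerm z w r := by
  have hz : triangular (-(r + 1)) = triangular r := by
    rw [neg_add', triangular_neg_sub_one]
  have hw : triangular (-(r + 1) - 1) = 2 * r + 1 + triangular (r - 1) := by
    have := triangular_add_one r
    have := triangular_add_one (r - 1)
    rw [sub_add_cancel] at this
    rw [triangular_neg_sub_one]
    lia
  rw [thetaTerm, hz, hw, thetaTerm]
  ring

theorem pow_mul_thetaTerm_sub_add_one (z w : R) (n k : ℕ) :
    (z * w) ^ k * thetaTerm z w (k - (n + 1)) =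
      w * (z * w) ^ n * thetaTerm z w (k - n) := by
  have hz : k + triangular (k - (n + 1)) = n + triangular (k - n) := by
    have := triangular_add_one (k - (n + 1))
    rw [← sub_sub, sub_add_cancel] at *
    lia
  have hw : k + triangular (k - (n + 1) - 1) = n + 1 + triangular (k - n - 1) := by
    have := triangular_add_one (k - (n + 1) - 1)
    rw [sub_add_cancel, ← sub_sub] at *
    lia
  calc (z * w) ^ k * thetaTerm z w (k - (n + 1))
    _ = z ^ (k + triangular (k - (n + 1))) * w ^ (k + triangular (k - (n + 1) - 1)) := by
      rw [thetaTerm]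
      ring
    _ = w * (z * w) ^ n * thetaTerm z w (k - n) := by
      rw [hz, hw, thetaTerm]
      ring

theorem thetaTerm_natCast (z w : R) (k : ℕ) :
    thetaTerm z w k = (z * w) ^ k.choose 2 * z ^ k := by
  induction k with
  | zero => simp [thetaTerm, triangular]
  | succ k ih =>
    rw [Nat.cast_add_one, thetaTerm_add_one, ih, Nat.choose_succ_succ' k 1, Nat.choose_one_right]
    ring

theorem prod_mul_prod_eq_sum_gaussBinom_mul_thetaTerm (z w : R) (m n : ℕ) :
    (∏ i ∈ range m, (1 + z * (z * w) ^ i)) * ∏ i ∈ range n, (1 + w * (z * w) ^ i) =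
      ∑ k ∈ range (m + n + 1), gaussBinom (z * w) (m + n) k * thetaTerm z w (k - n) := by
  induction n with
  | zero => simpa [thetaTerm_natCast] using prod_one_add_mul_pow (z * w) z m
  | succ n ih =>
    rw [prod_range_succ, ← mul_assoc, ih, mul_comm]
    push_cast
    refine (sum_gaussBinom_succ_mul (fun k ↦ ?_) (pow_mul_thetaTerm_sub_add_one z w n)
      (m + n)).symm
    rw [one_mul]
    congr 1
    push_cast
    ring

theorem pow_natAbs_dvd_thetaTerm {x z w : R} (hz : x ∣ z) (hw : x ∣ w) (j : ℤ) :
    x ^ j.natAbs ∣ thetaTerm z w j := by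
  have hdvd : x ^ (triangular j + triangular (j - 1)) ∣ thetaTerm z w j := by
    rw [pow_add]
    exact mul_dvd_mul (pow_dvd_pow_of_dvd hz _) (pow_dvd_pow_of_dvd hw _)
  rw [triangular_add_triangular_sub_one] at hdvd
  exact (pow_dvd_pow x (Nat.le_self_pow two_ne_zero _)).trans hdvd

theorem pow_dvd_qPochhammer_mul_gaussBinom_sub_one {x q : R} (hx : x ∣ q) {t k l n : ℕ}
    (hk : t ≤ k) (hl : t ≤ l) (hn : t ≤ n) (hunit : IsUnit (qPochhammer q k)) :
    x ^ (t + 1) ∣ qPochhammer q n * gaussBinom q (k + l) k - 1 := by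
  have h_expand : (qPochhammer q n * gaussBinom q (k + l) k - 1) * qPochhammer q k =
      (qPochhammer q n - qPochhammer q l) * (gaussBinom q (k + l) k * qPochhammer q k) +
        (qPochhammer q (k + l) - qPochhammer q k) := by
    rw [← gaussBinom_mul_qPochhammer_mul_qPochhammer]
    ring
  have hcongr {a b : ℕ} (ha : t ≤ a) (hb : t ≤ b) :
      x ^ (t + 1) ∣ qPochhammer q a - qPochhammer q b := by
    rw [← sub_sub_sub_cancel_right _ _ (qPochhammer q t)]
    exact dvd_sub (pow_dvd_qPochhammer_sub hx ha) (pow_dvd_qPochhammer_sub hx hb)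
  rw [← hunit.dvd_mul_right, h_expand]
  exact dvd_add ((hcongr hn hl).mul_right _) (hcongr (by lia) hk)

theorem pow_dvd_qPochhammer_mul_prod_mul_prod_sub_sum {x z w : R} (hz : x ∣ z) (hw : x ∣ w)
    (hunit : ∀ n, IsUnit (qPochhammer (z * w) n)) (n : ℕ) :
    x ^ (n + 1) ∣ qPochhammer (z * w) n * ((∏ i ∈ range n, (1 + z * (z * w) ^ i)) *
      ∏ i ∈ range n, (1 + w * (z * w) ^ i)) -
        ∑ k ∈ range (n + n + 1), thetaTerm z w (k - n) := by
  rw [prod_mul_prod_eq_sum_gaussBinom_mul_thetaTerm, mul_sum, ← sum_sub_distrib]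
  refine dvd_sum fun k hk ↦ ?_
  obtain ⟨l, hl⟩ : ∃ l, n + n = k + l :=
    Nat.exists_eq_add_of_le (Nat.lt_succ_iff.1 (mem_range.1 hk))
  have hgauss : x ^ (n - ((k : ℤ) - n).natAbs + 1) ∣
      qPochhammer (z * w) n * gaussBinom (z * w) (k + l) k - 1 :=
    pow_dvd_qPochhammer_mul_gaussBinom_sub_one (hz.mul_right w) (by lia) (by lia) (by lia)
      (hunit k)
  have hdvd := mul_dvd_mul hgauss (pow_natAbs_dvd_thetaTerm hz hw (k - n))
  rw [← pow_add] at hdvd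
  convert hdvd using 1
  · congr 1
    lia
  · rw [hl]
    ring

end Theta

section PowerSeries

open PowerSeries Filter Topology
open scoped PowerSeries.WithPiTopology

variable {R : Type*} [CommRing R]

theorem tendsto_order_nhds_top_of_X_pow_dvd {f : ℕ → R⟦X⟧} (h : ∀ n, X ^ n ∣ f n) :
    Tendsto (fun n ↦ (f n).order) atTop (𝓝 ⊤) := by
  rw [ENat.tendsto_nhds_top_iff_natCast_lt]
  intro n
  filter_upwards [eventually_gt_atTop n] with m hm
  exact (Nat.cast_lt.2 hm).trans_le (nat_le_order _ _ (X_pow_dvd_iff.1 (h m)))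

theorem isUnit_qPochhammer {q : R⟦X⟧} (hq : X ∣ q) (n : ℕ) : IsUnit (qPochhammer q n) := by
  rw [X_dvd_iff] at hq
  simp [isUnit_iff_constantCoeff, qPochhammer, hq]

theorem eq_of_eq_add_X_pow_mul {f g : ℕ → R⟦X⟧}
    (hf : ∀ k, f k = f (k + 1) + X ^ (k + 1) * f (k + 2))
    (hg : ∀ k, g k = g (k + 1) + X ^ (k + 1) * g (k + 2))
    (hfg : ∀ k, X ^ k ∣ f k - g k) : f = g := by
  have hdvd (d : ℕ) : ∀ k, X ^ (k + d) ∣ f k - g k := by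
    induction d with
    | zero => exact hfg
    | succ d ih =>
      intro k
      have hrec : f k - g k =
          (f (k + 1) - g (k + 1)) + X ^ (k + 1) * (f (k + 2) - g (k + 2)) := by
        rw [hf k, hg k]
        ring
      rw [hrec]
      exact dvd_add ((pow_dvd_pow X (by lia)).trans (ih (k + 1)))
        (((pow_dvd_pow X (by lia)).trans (ih (k + 2))).mul_left _)
  ext k n
  rw [← sub_eq_zero, ← map_sub]
  exact X_pow_dvd_iff.1 (hdvd (n + 1) k) n (by lia)

variable [TopologicalSpace R]

theorem tendsto_zero_of_X_pow_dvd {f : ℕ → R⟦X⟧} (h : ∀ n, X ^ n ∣ f n) :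
    Tendsto f atTop (𝓝 0) := by
  rw [WithPiTopology.tendsto_iff_coeff_tendsto]
  refine fun d ↦ tendsto_atTop_of_eventually_const (i₀ := d + 1) fun n hn ↦ ?_
  rw [map_zero, X_pow_dvd_iff.1 (h n) d hn]

theorem summable_of_X_pow_dvd {f : ℕ → R⟦X⟧} (h : ∀ n, X ^ n ∣ f n) : Summable f :=
  WithPiTopology.summable_of_tendsto_order_atTop_nhds_top _ (tendsto_order_nhds_top_of_X_pow_dvd h)

theorem multipliable_one_add_of_X_pow_dvd {f : ℕ → R⟦X⟧} (h : ∀ n, X ^ n ∣ f n) :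
    Multipliable fun n ↦ 1 + f n :=
  WithPiTopology.multipliable_one_add_of_tendsto_order_atTop_nhds_top _
    (tendsto_order_nhds_top_of_X_pow_dvd h)

theorem X_pow_dvd_of_tendsto [T2Space R] {ι : Type*} {l : Filter ι} [l.NeBot] {f : ι → R⟦X⟧}
    {a : R⟦X⟧} {n : ℕ} (hf : Tendsto f l (𝓝 a)) (h : ∀ᶠ i in l, X ^ n ∣ f i) : X ^ n ∣ a := by
  rw [X_pow_dvd_iff]
  intro m hm
  have hlim := (WithPiTopology.tendsto_iff_coeff_tendsto R f l a).1 hf m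
  refine tendsto_nhds_unique_of_eventuallyEq hlim tendsto_const_nhds ?_
  filter_upwards [h] with i hi using X_pow_dvd_iff.1 hi m hm

theorem X_pow_dvd_tsum [T2Space R] {ι : Type*} {f : ι → R⟦X⟧} {n : ℕ} (h : ∀ i, X ^ n ∣ f i) :
    X ^ n ∣ ∑' i, f i := by
  by_cases hf : Summable f
  · exact X_pow_dvd_of_tendsto hf.hasSum (.of_forall fun s ↦ dvd_sum fun i _ ↦ h i)
  · simp [tsum_eq_zero_of_not_summable hf]

theorem X_pow_dvd_tprod_one_sub_X_pow_sub_qPochhammer [IsTopologicalRing R] [T2Space R] (n : ℕ) :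
    (X : R⟦X⟧) ^ (n + 1) ∣ (∏' i, (1 - X ^ (i + 1))) - qPochhammer X n := by
  have hlim := (WithPiTopology.multipliable_one_sub_X_pow R).hasProd.tendsto_prod_nat
  refine X_pow_dvd_of_tendsto (hlim.sub_const (qPochhammer X n)) ?_
  filter_upwards [eventually_ge_atTop n] with m hm
  exact pow_dvd_qPochhammer_sub dvd_rfl hm

/-- The **Jacobi triple product**, in the two-variable form due to Ramanujan. -/
theorem hasSum_thetaTerm [IsTopologicalRing R] [T2Space R] {z w : R⟦X⟧} (hz : X ∣ z) (hw : X ∣ w) :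
    HasSum (thetaTerm z w)
      (∏' i, (1 - (z * w) ^ (i + 1)) * ((1 + z * (z * w) ^ i) * (1 + w * (z * w) ^ i))) := by
  have hX (n : ℕ) : X ^ n ∣ (z * w) ^ n := pow_dvd_pow_of_dvd (hz.mul_right w) n
  have hmul : Multipliable fun i ↦
      (1 - (z * w) ^ (i + 1)) * ((1 + z * (z * w) ^ i) * (1 + w * (z * w) ^ i)) := by
    simp only [sub_eq_add_neg]
    refine .mul ?_ (.mul ?_ ?_) <;> refine multipliable_one_add_of_X_pow_dvd fun n ↦ ?_
    · rw [pow_succ, dvd_neg]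
      exact (hX n).mul_right _
    all_goals exact (hX n).mul_left _
  have hsum : Summable (thetaTerm z w) := by
    refine .of_nat_of_neg_add_one ?_ ?_ <;>
      refine summable_of_X_pow_dvd fun n ↦ ?_
    · exact pow_natAbs_dvd_thetaTerm hz hw n
    · exact (pow_dvd_pow X (by lia)).trans (pow_natAbs_dvd_thetaTerm hz hw (-(n + 1)))
  have hrange (n : ℕ) : ∑ k ∈ range (n + n + 1), thetaTerm z w (k - n) =
      ∑ j ∈ Icc (-n : ℤ) n, thetaTerm z w j :=
    sum_nbij' (fun k ↦ (k : ℤ) - n) (fun j ↦ (j + n).toNat) (by grind) (by grind) (by grind)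
      (by grind) (by simp)
  have hlim := tendsto_zero_of_X_pow_dvd fun n ↦ (pow_dvd_pow X n.le_succ).trans
    (pow_dvd_qPochhammer_mul_prod_mul_prod_sub_sum hz hw
      (isUnit_qPochhammer (hz.mul_right w)) n)
  simp only [hrange, qPochhammer, ← prod_mul_distrib] at hlim
  have hlim' := hmul.hasProd.tendsto_prod_nat.sub (hsum.hasSum.comp tendsto_Icc_neg)
  rw [sub_eq_zero.1 (tendsto_nhds_unique hlim hlim').symm]
  exact hsum.hasSum

end PowerSeries

section Rogers

variable {R : Type*} [CommRing R]

/-- The `r`-th term of Rogers's series: `thetaTerm (-x ^ 3) (-x ^ 2) r` is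
`(-1) ^ r * x ^ (r * (5 * r + 1) / 2)`. -/
def rogersTerm (x : R) (k r : ℕ) : R :=
  thetaTerm (-x ^ 3) (-x ^ 2) r * x ^ (2 * k * r) *
    ((1 - x ^ (2 * (k + 1) + 4 * r)) * ∏ i ∈ range k, (1 - x ^ (r + 1 + i)))

/-- The telescoping certificate for the recurrence in `k` satisfied by `∑ r, rogersTerm x k r`; the
factor `1 - x ^ r` makes it vanish at `r = 0`, so that the telescoping leaves no boundary term. -/
def rogersCert (x : R) (k r : ℕ) : R :=
  thetaTerm (-x ^ 3) (-x ^ 2) r * x ^ (2 * k * r) * (1 - x ^ r) *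
    (1 + x ^ r + x ^ (k + 1 + 3 * r) * (1 - x ^ (k + r + 1))) *
      ∏ i ∈ range k, (1 - x ^ (r + 1 + i))

theorem rogersTerm_sub_sub (x : R) (k r : ℕ) :
    rogersTerm x k r - rogersTerm x (k + 1) r - x ^ (k + 1) * rogersTerm x (k + 2) r =
      rogersCert x k r - rogersCert x k (r + 1) := by
  have hprod : (1 - x ^ (r + 1)) * ∏ i ∈ range k, (1 - x ^ (r + 1 + 1 + i)) =
      (∏ i ∈ range k, (1 - x ^ (r + 1 + i))) * (1 - x ^ (r + 1 + k)) := by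
    rw [← prod_range_succ, prod_range_succ', mul_comm]
    congr! 3 with i
    ring
  have htheta : thetaTerm (-x ^ 3) (-x ^ 2) (r + 1) =
      -x ^ (5 * r + 3) * thetaTerm (-x ^ 3) (-x ^ 2) r := by
    rw [thetaTerm_add_one, pow_succ', mul_assoc (-x ^ 3), ← mul_pow, neg_mul_neg]
    ring
  simp only [rogersTerm, rogersCert, prod_range_succ]
  push_cast
  rw [htheta]
  linear_combination -x ^ (5 * r + 3) * thetaTerm (-x ^ 3) (-x ^ 2) r * x ^ (2 * k * (r + 1)) *
    (1 + x ^ (r + 1) + x ^ (k + 1 + 3 * (r + 1)) * (1 - x ^ (k + r + 2))) * hprod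

theorem pow_dvd_thetaTerm_mul_pow (x : R) (k r : ℕ) :
    x ^ ((2 * k + 1) * r) ∣ thetaTerm (-x ^ 3) (-x ^ 2) r * x ^ (2 * k * r) := by
  have hz : x ∣ -x ^ 3 := (dvd_pow_self x three_ne_zero).neg_right
  have hw : x ∣ -x ^ 2 := (dvd_pow_self x two_ne_zero).neg_right
  rw [add_mul, one_mul, add_comm, pow_add]
  exact mul_dvd_mul_right (pow_natAbs_dvd_thetaTerm hz hw r) _

theorem pow_dvd_rogersTerm (x : R) (k r : ℕ) : x ^ ((2 * k + 1) * r) ∣ rogersTerm x k r :=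
  (pow_dvd_thetaTerm_mul_pow x k r).mul_right _

theorem pow_dvd_rogersCert (x : R) (k r : ℕ) : x ^ ((2 * k + 1) * r) ∣ rogersCert x k r := by
  rw [rogersCert, mul_assoc _ (1 - x ^ r), mul_assoc]
  exact (pow_dvd_thetaTerm_mul_pow x k r).mul_right _

theorem rogersTerm_zero_left (x : R) (r : ℕ) :
    rogersTerm x 0 r = thetaTerm (-x ^ 3) (-x ^ 2) r + thetaTerm (-x ^ 3) (-x ^ 2) (-(r + 1)) := by
  rw [thetaTerm_neg_add_one, (odd_two_mul_add_one r).neg_pow]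
  simp only [rogersTerm, mul_zero, zero_mul, pow_zero, range_zero, prod_empty]
  ring

theorem rogersTerm_zero_right (x : R) (k : ℕ) :
    rogersTerm x k 0 = (1 - x ^ (2 * (k + 1))) * qPochhammer x k := by
  simp [rogersTerm, qPochhammer, thetaTerm, triangular, add_comm]

open PowerSeries Filter Topology
open scoped PowerSeries.WithPiTopology

variable (R) [TopologicalSpace R]

/-- Rogers's series, normalised so that `rogersSum R k` is the product of `∏ (1 - X ^ (i + 1))` and
the generating function of the partitions counted by `TwoDistinctAbove k`. -/
noncomputable def rogersSum (k : ℕ) : R⟦X⟧ :=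
  ∑' r, rogersTerm X k r

theorem summable_rogersTerm (k : ℕ) : Summable (rogersTerm (X : R⟦X⟧) k) :=
  summable_of_X_pow_dvd fun r ↦
    (pow_dvd_pow X (Nat.le_mul_of_pos_left r (2 * k).succ_pos)).trans (pow_dvd_rogersTerm X k r)

variable [IsTopologicalRing R] [T2Space R]

theorem rogersSum_eq_add (k : ℕ) :
    rogersSum R k = rogersSum R (k + 1) + X ^ (k + 1) * rogersSum R (k + 2) := by
  have hcert : Tendsto (rogersCert (X : R⟦X⟧) k) atTop (𝓝 0) :=
    tendsto_zero_of_X_pow_dvd fun r ↦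
      (pow_dvd_pow X (Nat.le_mul_of_pos_left r (2 * k).succ_pos)).trans (pow_dvd_rogersCert X k r)
  have htelescope : HasSum
      (fun r ↦ rogersTerm (X : R⟦X⟧) k r - rogersTerm X (k + 1) r -
        X ^ (k + 1) * rogersTerm X (k + 2) r)
      (rogersSum R k - rogersSum R (k + 1) - X ^ (k + 1) * rogersSum R (k + 2)) :=
    ((summable_rogersTerm R k).hasSum.sub (summable_rogersTerm R (k + 1)).hasSum).sub
      ((summable_rogersTerm R (k + 2)).hasSum.mul_left _)
  have hlim := htelescope.tendsto_sum_nat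
  simp only [rogersTerm_sub_sub, sum_range_sub'] at hlim
  have hzero : rogersCert (X : R⟦X⟧) k 0 = 0 := by simp [rogersCert]
  have := tendsto_nhds_unique hlim (hcert.const_sub _)
  linear_combination this + hzero

theorem X_pow_dvd_rogersSum_sub_tprod (k : ℕ) :
    X ^ k ∣ rogersSum R k - ∏' i, (1 - X ^ (i + 1)) := by
  have hsplit : rogersSum R k - ∏' i, (1 - X ^ (i + 1)) =
      ∑' r, rogersTerm (X : R⟦X⟧) k (r + 1) - X ^ (2 * (k + 1)) * qPochhammer X k -
        ((∏' i, (1 - X ^ (i + 1))) - qPochhammer X k) := by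
    rw [rogersSum, (summable_rogersTerm R k).tsum_eq_zero_add, rogersTerm_zero_right]
    ring
  rw [hsplit]
  refine dvd_sub (dvd_sub (X_pow_dvd_tsum fun r ↦ ?_) (.mul_right (pow_dvd_pow X (by lia)) _)) ?_
  · exact (pow_dvd_pow X (by nlinarith)).trans (pow_dvd_rogersTerm X k (r + 1))
  · exact (pow_dvd_pow X k.le_succ).trans (X_pow_dvd_tprod_one_sub_X_pow_sub_qPochhammer k)

theorem rogersSum_zero : rogersSum R 0 =
    ∏' i, (1 - X ^ (5 * i + 2)) * (1 - X ^ (5 * i + 3)) * (1 - X ^ (5 * i + 5)) := by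
  have hz : (X : R⟦X⟧) ∣ -X ^ 3 := (dvd_pow_self X three_ne_zero).neg_right
  have hw : (X : R⟦X⟧) ∣ -X ^ 2 := (dvd_pow_self X two_ne_zero).neg_right
  have hsum := (hasSum_thetaTerm hz hw).nat_add_neg_add_one
  simp only [← rogersTerm_zero_left] at hsum
  rw [rogersSum, hsum.tsum_eq]
  congr! 2 with i
  rw [neg_mul_neg, ← pow_add]
  ring

end Rogers

theorem hasProd_prod_fin {M : Type*} [CommMonoid M] [TopologicalSpace M] [ContinuousMul M]
    [RegularSpace M] {f : ℕ → M} {a : M} (hf : HasProd f a) (m : ℕ) [NeZero m] :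
    HasProd (fun i ↦ ∏ j : Fin m, f (m * i + j)) a := by
  have h := (Nat.divModEquiv m).symm.hasProd_iff.2 hf
  convert h.prod_fiberwise fun i ↦ hasProd_fintype _ using 3 with i j
  simp [mul_comm, add_comm]

section Partition

open PowerSeries
open scoped PowerSeries.WithPiTopology

/-- The generating function of the partitions whose multiset of parts satisfies `Q`. -/
noncomputable def partitionSeries (R : Type*) [CommRing R] (Q : Multiset ℕ → Prop) : R⟦X⟧ :=
  .mk fun n ↦ Nat.card {p : n.Partition // Q p.parts}

/-- Adjoining a part `a` to a partition of `n`. -/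
def consPartEquiv (Q : Multiset ℕ → Prop) {a : ℕ} (ha : 0 < a) (n : ℕ) :
    {p : n.Partition // Q (a ::ₘ p.parts)} ≃
      {p : (n + a).Partition // Q p.parts ∧ a ∈ p.parts} where
  toFun p :=
    ⟨{ parts := a ::ₘ p.1.parts
       parts_pos := Multiset.forall_mem_cons.2 ⟨ha, fun _ ↦ p.1.parts_pos⟩ _
       parts_sum := by rw [Multiset.sum_cons, p.1.parts_sum, add_comm] },
      p.2, Multiset.mem_cons_self _ _⟩
  invFun p :=
    ⟨{ parts := p.1.parts.erase a
       parts_pos := fun hi ↦ p.1.parts_pos (Multiset.mem_of_mem_erase hi)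
       parts_sum := by
        have := Multiset.sum_erase p.2.2
        have := p.1.parts_sum
        lia },
      by simpa only [Multiset.cons_erase p.2.2] using p.2.1⟩
  left_inv p := Subtype.ext (Nat.Partition.ext (Multiset.erase_cons_head _ _))
  right_inv p := Subtype.ext (Nat.Partition.ext (Multiset.cons_erase p.2.2))

variable (R : Type*) [CommRing R]

theorem partitionSeries_eq_add (Q : Multiset ℕ → Prop) {a : ℕ} (ha : 0 < a) :
    partitionSeries R Q = partitionSeries R (fun s ↦ Q s ∧ a ∉ s) +
      X ^ a * partitionSeries R (fun s ↦ Q (a ::ₘ s)) := by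
  classical
  ext n
  have hsplit : Nat.card {p : n.Partition // Q p.parts} =
      Nat.card {p : n.Partition // Q p.parts ∧ a ∉ p.parts} +
        Nat.card {p : n.Partition // Q p.parts ∧ a ∈ p.parts} := by
    simp only [Nat.card_eq_fintype_card, Fintype.card_subtype, ← filter_filter]
    rw [add_comm, card_filter_add_card_filter_not]
  rw [map_add, coeff_X_pow_mul']
  simp only [partitionSeries, coeff_mk]
  rw [hsplit, Nat.cast_add]
  congr 1
  split_ifs with h
  · obtain ⟨m, rfl⟩ := Nat.exists_eq_add_of_le' h
    rw [Nat.add_sub_cancel, Nat.card_congr (consPartEquiv Q ha m)]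
  · have : IsEmpty {p : n.Partition // Q p.parts ∧ a ∈ p.parts} :=
      ⟨fun p ↦ h (Nat.Partition.le_of_mem_parts p.2.2)⟩
    simp

theorem X_pow_dvd_partitionSeries_sub_one {Q : Multiset ℕ → Prop} {k : ℕ} (hzero : Q 0)
    (hQ : ∀ s, Q s → ∀ i ∈ s, k ≤ i) : X ^ k ∣ partitionSeries R Q - 1 := by
  rw [X_pow_dvd_iff]
  intro m hm
  rw [map_sub, coeff_one, partitionSeries, coeff_mk]
  rcases eq_or_ne m 0 with rfl | hm0
  · have : Unique {p : Nat.Partition 0 // Q p.parts} :=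
      ⟨⟨⟨default, by simpa using hzero⟩⟩, fun p ↦ Subtype.ext (Subsingleton.elim _ _)⟩
    rw [Nat.card_unique, Nat.cast_one, if_pos rfl, sub_self]
  · have : IsEmpty {p : m.Partition // Q p.parts} := by
      refine ⟨fun p ↦ hm0 ?_⟩
      have hparts : p.1.parts = 0 := Multiset.eq_zero_of_forall_notMem fun i hi ↦
        hm.not_ge ((hQ _ p.2 i hi).trans (Nat.Partition.le_of_mem_parts hi))
      rw [← p.1.parts_sum, hparts, Multiset.sum_zero]
    simp [hm0]

/-- The parts exceed `k` and pairwise differ by at least `2`; the latter is expressed by requiring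
that `{a, a + 1}` contains at most one part, for every `a`. -/
def TwoDistinctAbove (k : ℕ) (s : Multiset ℕ) : Prop :=
  (∀ i ∈ s, k < i) ∧ ∀ a, s.count a + s.count (a + 1) ≤ 1

theorem twoDistinctAbove_succ {k : ℕ} {s : Multiset ℕ} :
    TwoDistinctAbove (k + 1) s ↔ TwoDistinctAbove k s ∧ k + 1 ∉ s := by
  unfold TwoDistinctAbove
  grind

theorem twoDistinctAbove_cons {k : ℕ} {s : Multiset ℕ} :
    TwoDistinctAbove k ((k + 1) ::ₘ s) ↔ TwoDistinctAbove (k + 2) s := by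
  simp only [TwoDistinctAbove, Multiset.mem_cons, Multiset.count_cons]
  constructor
  · rintro ⟨hlt, hcount⟩
    have hpos (i : ℕ) (hi : i ∈ s) := Multiset.count_pos.2 hi
    have hnext := hcount (k + 1)
    constructor <;> grind
  · rintro ⟨hlt, hcount⟩
    have hzero (i : ℕ) (hi : i ≤ k + 2) : s.count i = 0 :=
      Multiset.count_eq_zero.2 fun h ↦ (hlt i h).not_ge hi
    grind

theorem partitionSeries_twoDistinctAbove_eq_add (k : ℕ) :
    partitionSeries R (TwoDistinctAbove k) = partitionSeries R (TwoDistinctAbove (k + 1)) +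
      X ^ (k + 1) * partitionSeries R (TwoDistinctAbove (k + 2)) := by
  rw [partitionSeries_eq_add R _ k.succ_pos]
  simp only [← twoDistinctAbove_succ, twoDistinctAbove_cons]

variable [TopologicalSpace R] [IsTopologicalRing R] [T2Space R]

theorem partitionSeries_twoDistinctAbove_mul_tprod (k : ℕ) :
    partitionSeries R (TwoDistinctAbove k) * ∏' i, (1 - X ^ (i + 1)) = rogersSum R k := by
  suffices (fun k ↦ partitionSeries R (TwoDistinctAbove k) * ∏' i, (1 - X ^ (i + 1))) =
      rogersSum R from congrFun this k
  refine eq_of_eq_add_X_pow_mul (fun k ↦ ?_) (rogersSum_eq_add R) fun k ↦ ?_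
  · rw [partitionSeries_twoDistinctAbove_eq_add]
    ring
  · have hone : X ^ k ∣ partitionSeries R (TwoDistinctAbove k) - 1 :=
      X_pow_dvd_partitionSeries_sub_one R (by simp [TwoDistinctAbove])
        fun s hs i hi ↦ (hs.1 i hi).le
    convert dvd_sub (hone.mul_right (∏' i, (1 - X ^ (i + 1)))) (X_pow_dvd_rogersSum_sub_tprod R k)
      using 1
    ring

theorem hasProd_partitionSeries_mul_tprod (p : ℕ → Prop) [DecidablePred p] :
    HasProd (fun i ↦ if p (i + 1) then 1 else 1 - X ^ (i + 1))
      (partitionSeries R (fun s ↦ ∀ i ∈ s, p i) * ∏' i, (1 - X ^ (i + 1))) := by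
  have hcard : partitionSeries R (fun s ↦ ∀ i ∈ s, p i) =
      .mk fun n ↦ (#(Nat.Partition.restricted n p) : R) := by
    ext n
    simp [partitionSeries, Nat.Partition.restricted, Nat.card_eq_fintype_card,
      Fintype.card_subtype]
  rw [hcard]
  convert! (Nat.Partition.hasProd_powerSeriesMk_card_restricted R p).mul
    (WithPiTopology.multipliable_one_sub_X_pow R).hasProd using 2 with i
  split_ifs
  · simp only [pow_mul]
    rw [WithPiTopology.tsum_pow_mul_one_sub_of_constantCoeff_eq_zero (by simp)]
  · rw [one_mul]

theorem partitionSeries_mod_five_mul_tprod :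
    partitionSeries R (fun s ↦ ∀ i ∈ s, i % 5 = 1 ∨ i % 5 = 4) * ∏' i, (1 - X ^ (i + 1)) =
      ∏' i, (1 - X ^ (5 * i + 2)) * (1 - X ^ (5 * i + 3)) * (1 - X ^ (5 * i + 5)) := by
  have h := hasProd_prod_fin
    (hasProd_partitionSeries_mul_tprod R fun i ↦ i % 5 = 1 ∨ i % 5 = 4) 5
  rw [← h.tprod_eq]
  congr! 2 with i
  simp [Fin.prod_univ_five, add_assoc]

theorem isUnit_tprod_one_sub_X_pow : IsUnit (∏' i, (1 - X ^ (i + 1)) : R⟦X⟧) := by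
  have h : (X : R⟦X⟧) ∣ (∏' i, (1 - X ^ (i + 1))) - 1 := by
    simpa [qPochhammer] using X_pow_dvd_tprod_one_sub_X_pow_sub_qPochhammer (R := R) 0
  rw [X_dvd_iff, map_sub, map_one, sub_eq_zero] at h
  rw [isUnit_iff_constantCoeff, h]
  exact isUnit_one

end Partition

theorem partitionSeries_mod_five_eq_partitionSeries_twoDistinctAbove (R : Type*) [CommRing R] :
    partitionSeries R (fun s ↦ ∀ i ∈ s, i % 5 = 1 ∨ i % 5 = 4) =
      partitionSeries R (TwoDistinctAbove 0) := by
  let _ : TopologicalSpace R := ⊥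
  have : DiscreteTopology R := ⟨rfl⟩
  rw [← (isUnit_tprod_one_sub_X_pow R).mul_left_inj, partitionSeries_mod_five_mul_tprod,
    partitionSeries_twoDistinctAbove_mul_tprod, rogersSum_zero]

end RogersRamanujan

/-- The number of partitions of `n` into parts congruent to `1` or `4` mod `5`
equals the number of partitions of `n` whose (non-increasing) parts satisfy
`λᵢ - λᵢ₊₁ ≥ 2`; the latter condition is equivalent to: for every `a`, at most one
part lies in `{a, a+1}`. -/
theorem stmt9 (n : ℕ) :
    Nat.card {p : n.Partition // ∀ i ∈ p.parts, i % 5 = 1 ∨ i % 5 = 4}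
      = Nat.card {p : n.Partition //
          ∀ a : ℕ, p.parts.count a + p.parts.count (a + 1) ≤ 1} := by
  have hcoeff := congrArg (PowerSeries.coeff n)
    (RogersRamanujan.partitionSeries_mod_five_eq_partitionSeries_twoDistinctAbove ℤ)
  simp only [RogersRamanujan.partitionSeries, PowerSeries.coeff_mk, Nat.cast_inj] at hcoeff
  rw [hcoeff]
  exact Nat.card_congr (Equiv.subtypeEquivRight fun p ↦ and_iff_right fun i ↦ p.parts_pos)
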